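/- Let Z = 2P_1 + ... + 2P_7 be a set of seven non-degenerate double points in P^4 (i.e., P_1,...,P_7 span P^4) over an algebraically closed field. Then reg(Z) ≥ 4. -/

import Mathlib

open MvPolynomial

noncomputable section

/-- The defining prime ideal of the point of projective space with homogeneous
coordinates `p`: the ideal generated by the linear forms vanishing at `p`. -/
def pointIdeal {K : Type} [Field K] {N : ℕ} (p : Fin N → K) :
    Ideal (MvPolynomial (Fin N) K) :=
  Ideal.span {f | f.IsHomogeneous 1 ∧ eval p f = 0}

/-- The ideal of the fat point scheme `m₁P₁ + ⋯ + m_sP_s`. -/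
def fatIdeal {K : Type} [Field K] {N s : ℕ} (p : Fin s → Fin N → K) (m : Fin s → ℕ) :
    Ideal (MvPolynomial (Fin N) K) :=
  ⨅ i, pointIdeal (p i) ^ (m i)

/-- `dim_K` of the degree-`t` graded piece of the ideal `I`. -/
def gradedDim (K : Type) [Field K] {N : ℕ} (I : Ideal (MvPolynomial (Fin N) K)) (t : ℕ) : ℕ :=
  Module.finrank K ↥(homogeneousSubmodule (Fin N) K t ⊓ I.restrictScalars K)

/-- The Hilbert function of `R/I` in degree `t`. -/
def hilbFn (K : Type) [Field K] {N : ℕ} (I : Ideal (MvPolynomial (Fin N) K)) (t : ℕ) : ℕ :=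
  Module.finrank K ↥(homogeneousSubmodule (Fin N) K t) - gradedDim K I t

/-- The regularity index of `R/I` relative to the multiplicity `e`:
the least `t` with `H_{R/I}(t) = e`. -/
def regIndex (K : Type) [Field K] {N : ℕ} (I : Ideal (MvPolynomial (Fin N) K)) (e : ℕ) : ℕ :=
  sInf {t | hilbFn K I t = e}

/-- The multiplicity `e(R/I) = ∑ C(mᵢ+n-1, n)` of a fat point scheme in `ℙⁿ`. -/
def fatMult (n : ℕ) {s : ℕ} (m : Fin s → ℕ) : ℕ :=
  ∑ i, (m i + n - 1).choose n

/-- The regularity index of the fat point scheme `m₁P₁ + ⋯ + m_sP_s` in `ℙⁿ`. -/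
def regFat (K : Type) [Field K] {n s : ℕ} (p : Fin s → Fin (n + 1) → K) (m : Fin s → ℕ) : ℕ :=
  regIndex K (fatIdeal p m) (fatMult n m)

/-- The coordinate vectors `p i` represent distinct points of projective space. -/
def ProjDistinct {K : Type} [Field K] {N s : ℕ} (p : Fin s → Fin N → K) : Prop :=
  (∀ i, p i ≠ 0) ∧ ∀ i j, i ≠ j → ∀ c : K, p i ≠ c • p j

/-- The points `p i`, `i ∈ Q`, lie on a `j`-dimensional linear subspace of `ℙⁿ`. -/
def OnLinearSubspace {K : Type} [Field K] {N s : ℕ} (p : Fin s → Fin N → K)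
    (Q : Finset (Fin s)) (j : ℕ) : Prop :=
  ∃ W : Submodule K (Fin N → K), Module.finrank K ↥W ≤ j + 1 ∧ ∀ i ∈ Q, p i ∈ W

open Classical in
/-- The Segre bound `T(Z) = max {T_j(Z) | j = 1,…,n}` for fat points in `ℙⁿ`. -/
def segreBound {K : Type} [Field K] (n : ℕ) {s : ℕ} (p : Fin s → Fin (n + 1) → K)
    (m : Fin s → ℕ) : ℕ :=
  (Finset.Icc 1 n).sup fun j =>
    Finset.univ.powerset.sup fun Q =>
      if Q.Nonempty ∧ OnLinearSubspace p Q j then (∑ i ∈ Q, m i + j - 2) / j else 0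

/-- The standard coordinate point `(1,0,…,0)`. -/
def stdPt (K : Type) [Field K] (N : ℕ) : Fin N → K := fun j => if (j : ℕ) = 0 then 1 else 0

/-! ### Dimension of the space of forms -/

lemma finrank_homog_le (K : Type) [Field K] (t : ℕ) :
    Module.finrank K ↥(homogeneousSubmodule (Fin 5) K t) ≤ (5 + t - 1).choose t := by
  classical
  have hle : homogeneousSubmodule (Fin 5) K t ≤
      Submodule.span K (((Finset.univ.finsuppAntidiag t).image
        (fun d : Fin 5 →₀ ℕ => monomial d (1 : K)) : Finset (MvPolynomial (Fin 5) K)) :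
          Set (MvPolynomial (Fin 5) K)) := by
    intro f hf
    rw [f.as_sum]
    refine Submodule.sum_mem _ fun d hd => ?_
    have hc : coeff d f ≠ 0 := mem_support_iff.1 hd
    have hdeg : d.degree = t := by
      by_contra hne
      exact hc (IsHomogeneous.coeff_eq_zero hf hne)
    have : monomial d (coeff d f) = coeff d f • monomial d (1 : K) := by
      rw [smul_monomial]; simp
    rw [this]
    refine Submodule.smul_mem _ _ (Submodule.subset_span ?_)
    rw [Finset.mem_coe, Finset.mem_image]
    refine ⟨d, ?_, rfl⟩
    rw [Finset.mem_finsuppAntidiag]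
    refine ⟨?_, by simp⟩
    rw [← hdeg, Finsupp.degree_eq_sum]
  have : FiniteDimensional K ↥(Submodule.span K (((Finset.univ.finsuppAntidiag t).image
        (fun d : Fin 5 →₀ ℕ => monomial d (1 : K)) : Finset (MvPolynomial (Fin 5) K)) :
          Set (MvPolynomial (Fin 5) K))) := FiniteDimensional.span_finset _ _
  refine (Submodule.finrank_mono hle).trans ((finrank_span_finset_le_card _).trans
    (Finset.card_image_le.trans ?_))
  rw [Finset.card_finsuppAntidiag_nat_eq_choose]
  simp

instance finite_homog (K : Type) [Field K] (t : ℕ) :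
    FiniteDimensional K ↥(homogeneousSubmodule (Fin 5) K t) :=
  Module.Finite.iff_fg.2 (homogeneousSubmodule_fg _ _ t)

/-! ### Linear forms -/

/-- The linear form with coefficient vector `g`. -/
def linForm {K : Type} [Field K] (g : Fin 5 → K) : MvPolynomial (Fin 5) K :=
  ∑ n, C (g n) * X n

lemma linForm_homog {K : Type} [Field K] (g : Fin 5 → K) : (linForm g).IsHomogeneous 1 :=
  IsHomogeneous.sum _ _ _ fun i _ => isHomogeneous_C_mul_X _ i

lemma eval_linForm {K : Type} [Field K] (g x : Fin 5 → K) :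
    eval x (linForm g) = ∑ n, g n * x n := by
  simp [linForm]

lemma pderiv_linForm {K : Type} [Field K] (g : Fin 5 → K) (m : Fin 5) :
    pderiv m (linForm g) = C (g m) := by
  classical
  simp [linForm, pderiv_X, Pi.single_apply]

/-- Every linear functional is evaluation of a linear form. -/
lemma exists_linForm {K : Type} [Field K] (φ : (Fin 5 → K) →ₗ[K] K) :
    ∃ g : Fin 5 → K, ∀ x, eval x (linForm g) = φ x := by
  refine ⟨fun n => φ (Pi.single n 1), fun x => ?_⟩
  rw [eval_linForm]
  conv_rhs => rw [← Finset.univ_sum_single x, map_sum]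
  refine Finset.sum_congr rfl fun n _ => ?_
  have : (Pi.single n (x n) : Fin 5 → K) = x n • Pi.single n (1 : K) := by
    ext j
    by_cases h : j = n
    · subst h; simp
    · simp [h]
  rw [this, map_smul, smul_eq_mul, mul_comm]

/-! ### Membership in squares of point ideals -/

lemma eval_of_mem_pointIdeal {K : Type} [Field K] {q : Fin 5 → K} {f : MvPolynomial (Fin 5) K}
    (hf : f ∈ pointIdeal q) : eval q f = 0 := by
  have : pointIdeal q ≤ RingHom.ker (eval q) := by
    unfold pointIdeal
    rw [Ideal.span_le]
    intro f hf
    exact hf.2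
  exact this hf

lemma pderiv_of_mem_sq {K : Type} [Field K] {q : Fin 5 → K} {f : MvPolynomial (Fin 5) K}
    (hf : f ∈ pointIdeal q ^ 2) (m : Fin 5) : eval q (pderiv m f) = 0 := by
  rw [pow_two] at hf
  induction hf using Submodule.mul_induction_on' with
  | mem_mul_mem a ha b hb =>
    rw [pderiv_mul, map_add, map_mul, map_mul, eval_of_mem_pointIdeal ha,
      eval_of_mem_pointIdeal hb]
    simp
  | add x hx y hy h1 h2 => rw [map_add, map_add, h1, h2, add_zero]

lemma linForm_mem {K : Type} [Field K] {q : Fin 5 → K} {f : MvPolynomial (Fin 5) K}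
    (h : f.IsHomogeneous 1) (h' : eval q f = 0) : f ∈ pointIdeal q :=
  Ideal.subset_span ⟨h, h'⟩

/-- First order Taylor expansion. -/
lemma taylor_mem {K : Type} [Field K] {A : Type} [CommRing A] [Algebra K A] (J : Ideal A)
    (y u : Fin 5 → A) (hu : ∀ i, u i ∈ J) (F : MvPolynomial (Fin 5) K) :
    aeval (fun i => y i + u i) F - aeval y F - ∑ m, aeval y (pderiv m F) * u m ∈ J ^ 2 := by
  classical
  induction F using MvPolynomial.induction_on with
  | C a => simp
  | add f g hf hg =>
    convert Ideal.add_mem _ hf hg using 1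
    simp only [map_add, add_mul, Finset.sum_add_distrib]
    ring
  | mul_X f n hf =>
    have h1 : aeval (fun i => y i + u i) f - aeval y f ∈ J := by
      have h2 : ∑ m, aeval y (pderiv m f) * u m ∈ J :=
        Ideal.sum_mem _ fun m _ => Ideal.mul_mem_left _ _ (hu m)
      have h3 := Ideal.add_mem _ (Ideal.pow_le_self (two_ne_zero) hf) h2
      simpa using h3
    have h4 : (aeval (fun i => y i + u i) f - aeval y f) * u n ∈ J ^ 2 := by
      rw [pow_two]; exact Ideal.mul_mem_mul h1 (hu n)
    convert Ideal.add_mem _ h4 (Ideal.mul_mem_right (y n) _ hf) using 1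
    have h5 : ∑ m, aeval y (pderiv m (f * X n)) * u m
        = (∑ m, aeval y (pderiv m f) * u m) * y n + aeval y f * u n := by
      simp only [pderiv_mul, pderiv_X, map_add, map_mul, aeval_X, add_mul,
        Finset.sum_add_distrib, Finset.sum_mul]
      congr 1
      · exact Finset.sum_congr rfl fun _ _ => by ring
      · rw [Finset.sum_eq_single n]
        · simp
        · intro b _ hb; simp [Pi.single_apply, hb.symm]
        · simp
    rw [h5]
    simp only [map_mul, aeval_X]
    ring

lemma aeval_smul_form {K : Type} [Field K] {t : ℕ} {F : MvPolynomial (Fin 5) K}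
    (hF : F.IsHomogeneous t) (q : Fin 5 → K) (L : MvPolynomial (Fin 5) K) :
    aeval (fun i => C (q i) * L) F = C (eval q F) * L ^ t := by
  rw [aeval_def, eval₂_eq, eval_eq, map_sum, Finset.sum_mul]
  refine Finset.sum_congr rfl fun d hd => ?_
  have hdeg : d.degree = t := by
    by_contra hne
    exact mem_support_iff.1 hd (hF.coeff_eq_zero hne)
  simp only [mul_pow, Finset.prod_mul_distrib, Finset.prod_pow_eq_pow_sum, map_mul, map_prod,
    map_pow, algebraMap_eq]
  rw [← hdeg, Finsupp.degree_apply]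
  ring

/-- Criterion for a form to lie in the square of a point ideal. -/
lemma mem_sq_of_pderiv {K : Type} [Field K] {t : ℕ} {F : MvPolynomial (Fin 5) K}
    (hF : F.IsHomogeneous t) {q : Fin 5 → K} (hq : q ≠ 0) (h0 : eval q F = 0)
    (h1 : ∀ m, eval q (pderiv m F) = 0) : F ∈ pointIdeal q ^ 2 := by
  classical
  obtain ⟨i0, hi0⟩ := Function.ne_iff.1 hq
  simp only [Pi.zero_apply] at hi0
  set L : MvPolynomial (Fin 5) K := C (q i0)⁻¹ * X i0 with hL
  have hLh : L.IsHomogeneous 1 := isHomogeneous_C_mul_X _ _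
  have hLe : eval q L = 1 := by simp [hL, hi0]
  have key := taylor_mem (K := K) (pointIdeal q) (fun i => C (q i) * L)
    (fun i => X i - C (q i) * L) (fun i => linForm_mem
      ((isHomogeneous_X _ i).sub (hLh.C_mul _)) (by simp [hLe])) F
  have e1 : (fun i => C (q i) * L + (X i - C (q i) * L)) = (X : Fin 5 → MvPolynomial (Fin 5) K) := by
    funext i; ring
  have e2 : ∀ m, aeval (fun i => C (q i) * L) (pderiv m F) = 0 := fun m => by
    rw [aeval_smul_form hF.pderiv, h1 m]; simp
  rw [e1, aeval_smul_form hF, h0, aeval_X_left_apply] at key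
  simp only [e2, zero_mul, Finset.sum_const_zero, sub_zero, map_zero] at key
  exact key

lemma mem_sq_iff {K : Type} [Field K] {t : ℕ} (ht : (t : K) ≠ 0) {F : MvPolynomial (Fin 5) K}
    (hF : F.IsHomogeneous t) {q : Fin 5 → K} (hq : q ≠ 0) :
    F ∈ pointIdeal q ^ 2 ↔ ∀ m, eval q (pderiv m F) = 0 := by
  refine ⟨fun h m => pderiv_of_mem_sq h m, fun h => mem_sq_of_pderiv hF hq ?_ h⟩
  have := congrArg (eval q) hF.sum_X_mul_pderiv
  simp [h] at this
  tauto

/-! ### Surjectivity of the jet map in high degree -/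

/-- The map sending a polynomial to its gradients at the points. -/
def jetMap {K : Type} [Field K] (p : Fin 7 → Fin 5 → K) :
    MvPolynomial (Fin 5) K →ₗ[K] (Fin 7 → Fin 5 → K) :=
  LinearMap.pi fun i => LinearMap.pi fun m =>
    (aeval (p i)).toLinearMap ∘ₗ (pderiv (R := K) m).toLinearMap

lemma jetMap_apply {K : Type} [Field K] (p : Fin 7 → Fin 5 → K) (F : MvPolynomial (Fin 5) K)
    (i : Fin 7) (m : Fin 5) : jetMap p F i m = eval (p i) (pderiv m F) := by
  simp [jetMap, coe_aeval_eq_eval]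

lemma exists_sep {K : Type} [Field K] {q r : Fin 5 → K} (h : ∀ c : K, q ≠ c • r) :
    ∃ g : Fin 5 → K, eval q (linForm g) = 1 ∧ eval r (linForm g) = 0 := by
  have hn : q ∉ Submodule.span K {r} := by
    intro hm
    obtain ⟨c, hc⟩ := Submodule.mem_span_singleton.1 hm
    exact h c hc.symm
  obtain ⟨φ, hφ, hle⟩ := Submodule.exists_le_ker_of_notMem hn
  obtain ⟨g, hg⟩ := exists_linForm ((φ q)⁻¹ • φ)
  refine ⟨g, ?_, ?_⟩
  · rw [hg]; simp [hφ]
  · rw [hg]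
    have : φ r = 0 := hle (Submodule.mem_span_singleton_self r)
    simp [this]

lemma exists_single {K : Type} [Field K] (p : Fin 7 → Fin 5 → K) (hdist : ProjDistinct p)
    {t : ℕ} (ht : 13 ≤ t) (htK : (t : K) ≠ 0) (i : Fin 7) (v : Fin 5 → K) :
    ∃ F : MvPolynomial (Fin 5) K, F.IsHomogeneous t ∧ jetMap p F = Pi.single i v := by
  classical
  have hsep : ∀ j : Fin 7, ∃ g : Fin 5 → K, eval (p i) (linForm g) = 1 ∧
      (j ≠ i → eval (p j) (linForm g) = 0) := by
    intro j
    by_cases hj : j = i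
    · obtain ⟨g, hg, -⟩ := exists_sep (q := p i) (r := 0) (by simpa using hdist.1 i)
      exact ⟨g, hg, fun h => absurd hj h⟩
    · obtain ⟨g, hg, hg'⟩ := exists_sep (hdist.2 i j (Ne.symm hj))
      exact ⟨g, hg, fun _ => hg'⟩
  choose h h1 h0 using hsep
  set H : MvPolynomial (Fin 5) K :=
    linForm (h i) ^ (t - 13) * ∏ j ∈ Finset.univ.erase i, linForm (h j) ^ 2 with hH
  have hHh : H.IsHomogeneous (t - 1) := by
    have e1 := (linForm_homog (h i)).pow (t - 13)
    have e2 := IsHomogeneous.prod (Finset.univ.erase i) (fun j => linForm (h j) ^ 2) (fun _ => 2)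
      (fun j _ => by simpa using (linForm_homog (h j)).pow 2)
    have e3 := e1.mul e2
    convert e3 using 1
    simp
    omega
  have hHi : eval (p i) H = 1 := by
    simp [hH, h1]
  have hHj : ∀ j, j ≠ i → H ∈ pointIdeal (p j) ^ 2 := by
    intro j hj
    refine Ideal.mul_mem_left _ _ ?_
    rw [← Finset.mul_prod_erase _ _ (Finset.mem_erase.2 ⟨hj, Finset.mem_univ j⟩)]
    exact Ideal.mul_mem_right _ _ (Ideal.pow_mem_pow (linForm_mem (linForm_homog _) (h0 j hj)) 2)
  set w : Fin 5 → K := fun m => eval (p i) (pderiv m H) with hw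
  have hwp : ∑ m, p i m * w m = (t : K) - 1 := by
    have := congrArg (eval (p i)) hHh.sum_X_mul_pderiv
    simp [hHi] at this
    rw [this, Nat.cast_sub (by omega)]; simp
  set s : K := (∑ m, v m * p i m) / t with hs
  set g : Fin 5 → K := fun m => v m - s * w m with hg
  have hgp : ∑ m, g m * p i m = s := by
    have : ∑ m, g m * p i m = (∑ m, v m * p i m) - s * ∑ m, p i m * w m := by
      rw [Finset.mul_sum, ← Finset.sum_sub_distrib]
      exact Finset.sum_congr rfl fun m _ => by simp only [hg]; ring
    rw [this, hwp, hs]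
    field_simp
    ring
  refine ⟨H * linForm g, ?_, ?_⟩
  · convert hHh.mul (linForm_homog g) using 1
    omega
  · funext j
    by_cases hj : j = i
    · subst hj
      funext m
      rw [jetMap_apply, pderiv_mul, pderiv_linForm]
      simp only [map_add, map_mul, hHi, eval_linForm, hgp, eval_C, Pi.single_eq_same]
      simp only [hg, hw]
      ring
    · funext m
      rw [jetMap_apply, Pi.single_eq_of_ne hj]
      exact pderiv_of_mem_sq (Ideal.mul_mem_right _ _ (hHj j hj)) m

lemma hilb_large {K : Type} [Field K] (p : Fin 7 → Fin 5 → K) (hdist : ProjDistinct p)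
    {t : ℕ} (ht : 13 ≤ t) (htK : (t : K) ≠ 0) :
    hilbFn K (fatIdeal p (fun _ => 2)) t = 35 := by
  classical
  set A := homogeneousSubmodule (Fin 5) K t with hA
  set Φ : ↥A →ₗ[K] (Fin 7 → Fin 5 → K) := jetMap p ∘ₗ A.subtype with hΦ
  have hsurj : LinearMap.range Φ = ⊤ := by
    rw [LinearMap.range_eq_top]
    intro v
    choose F hF hF' using fun i => exists_single p hdist ht htK i (v i)
    refine ⟨∑ i, ⟨F i, hF i⟩, ?_⟩
    rw [map_sum]
    have : ∀ i, Φ ⟨F i, hF i⟩ = Pi.single i (v i) := fun i => hF' i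
    simp only [this]
    exact Finset.univ_sum_single v
  have hker : LinearMap.ker Φ =
      Submodule.comap A.subtype ((fatIdeal p (fun _ => 2)).restrictScalars K) := by
    ext ⟨F, hF⟩
    simp only [LinearMap.mem_ker, Submodule.mem_comap, Submodule.restrictScalars_mem, fatIdeal,
      Submodule.mem_iInf, Submodule.subtype_apply]
    have : (∀ i, F ∈ pointIdeal (p i) ^ 2) ↔ ∀ i m, eval (p i) (pderiv m F) = 0 :=
      forall_congr' fun i => mem_sq_iff htK hF (hdist.1 i)
    rw [this]
    constructor
    · intro h i m
      rw [← jetMap_apply]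
      exact congrFun (congrFun h i) m
    · intro h
      funext i m
      exact (jetMap_apply p F i m).trans (h i m)
  have hrn := LinearMap.finrank_range_add_finrank_ker Φ
  rw [hsurj, hker, finrank_top, ← Submodule.finrank_map_subtype_eq,
    Submodule.map_comap_subtype] at hrn
  have h35 : Module.finrank K (Fin 7 → Fin 5 → K) = 35 := by
    simp [Module.finrank_pi_fintype]
  unfold hilbFn gradedDim
  rw [h35] at hrn
  rw [← hA]
  omega

/-! ### The cubic -/

/-- First, second, third index of the ten squarefree cubic monomials. -/
def ti : Fin 10 → Fin 5 := ![0, 0, 0, 0, 0, 0, 1, 1, 1, 2]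
def tj : Fin 10 → Fin 5 := ![1, 1, 1, 2, 2, 3, 2, 2, 3, 3]
def tk : Fin 10 → Fin 5 := ![2, 3, 4, 3, 4, 4, 3, 4, 4, 4]

/-- Squarefree cubic monomials. -/
def mon {R : Type} [CommRing R] (a : Fin 5 → R) (s : Fin 10) : R := a (ti s) * a (tj s) * a (tk s)

/-- Partial derivatives of the squarefree cubic monomials. -/
def dmon {R : Type} [CommRing R] (a : Fin 5 → R) (m : Fin 5) (s : Fin 10) : R :=
  (if m = ti s then a (tj s) * a (tk s) else 0) + (if m = tj s then a (ti s) * a (tk s) else 0)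
    + (if m = tk s then a (ti s) * a (tj s) else 0)

/-- Two by two minors. -/
def br {R : Type} [CommRing R] (a b : Fin 5 → R) (i j : Fin 5) : R := a i * b j - a j * b i

/-- One coefficient of the generic cubic. -/
def cc {R : Type} [CommRing R] (a b : Fin 5 → R) (i j k l n : Fin 5) : R :=
  br a b i j * br a b i k * br a b j k * br a b l n * (a l * a n * b l * b n)

/-- The coefficients of the generic cubic (secant variety of the rational normal curve). -/
def cvec {R : Type} [CommRing R] (a b : Fin 5 → R) : Fin 10 → R :=
  ![cc a b 0 1 2 3 4, -cc a b 0 1 3 2 4, cc a b 0 1 4 2 3, cc a b 0 2 3 1 4, -cc a b 0 2 4 1 3,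
    cc a b 0 3 4 1 2, -cc a b 1 2 3 0 4, cc a b 1 2 4 0 3, -cc a b 1 3 4 0 2, cc a b 2 3 4 0 1]

lemma cvec_symm {R : Type} [CommRing R] (a b : Fin 5 → R) : cvec a b = cvec b a := by
  have : ∀ i j k l n, cc a b i j k l n = cc b a i j k l n := by
    intro i j k l n; simp only [cc, br]; ring
  simp only [cvec, this]

lemma cvec_mon {R : Type} [CommRing R] (a b : Fin 5 → R) : ∑ s, mon a s * cvec a b s = 0 := by
  simp [Fin.sum_univ_succ, mon, ti, tj, tk, cvec, cc, br]
  ring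

lemma cvec_dmon {R : Type} [CommRing R] (a b : Fin 5 → R) (m : Fin 5) :
    ∑ s, dmon a m s * cvec a b s = 0 := by
  fin_cases m <;>
  · simp [Fin.sum_univ_succ, dmon, ti, tj, tk, cvec, cc, br]
    ring

/-- Conditions at one point. -/
def rowv {R : Type} [CommRing R] (i0 : Fin 5) (a : Fin 5 → R) (m : Fin 5) (s : Fin 10) : R :=
  if m = i0 then mon a s else dmon a m s

/-- The matrix of conditions at two points. -/
def condMat {R : Type} [CommRing R] (i0 j0 : Fin 5) (a b : Fin 5 → R) :
    Matrix (Fin 10) (Fin 10) R := fun r s =>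
  Sum.elim (fun m => rowv i0 a m s) (fun m => rowv j0 b m s)
    ((finSumFinEquiv (m := 5) (n := 5)).symm r)

lemma rowv_cvec {R : Type} [CommRing R] (i0 : Fin 5) (a b : Fin 5 → R) (m : Fin 5) :
    ∑ s, rowv i0 a m s * cvec a b s = 0 := by
  unfold rowv
  split_ifs
  · exact cvec_mon a b
  · exact cvec_dmon a b m

lemma condMat_cvec {R : Type} [CommRing R] (i0 j0 : Fin 5) (a b : Fin 5 → R) :
    Matrix.mulVec (condMat i0 j0 a b) (cvec a b) = 0 := by
  funext r
  simp only [Matrix.mulVec, dotProduct, condMat, Pi.zero_apply]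
  rcases (finSumFinEquiv (m := 5) (n := 5)).symm r with m | m
  · exact rowv_cvec i0 a b m
  · rw [cvec_symm]; exact rowv_cvec j0 b a m

lemma condMat_map {R S : Type} [CommRing R] [CommRing S] (f : R →+* S) (i0 j0 : Fin 5)
    (a b : Fin 5 → R) :
    f.mapMatrix (condMat i0 j0 a b) = condMat i0 j0 (fun i => f (a i)) (fun i => f (b i)) := by
  ext r s
  simp only [RingHom.mapMatrix_apply, Matrix.map_apply, condMat]
  rcases (finSumFinEquiv (m := 5) (n := 5)).symm r with m | m <;>
    simp [rowv, mon, dmon, apply_ite f]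

lemma condMat_det {K : Type} [Field K] (i0 j0 : Fin 5) (a b : Fin 5 → K) :
    (condMat i0 j0 a b).det = 0 := by
  classical
  set x : Fin 5 → MvPolynomial (Fin 5 ⊕ Fin 5) K := fun i => X (Sum.inl i) with hx
  set y : Fin 5 → MvPolynomial (Fin 5 ⊕ Fin 5) K := fun i => X (Sum.inr i) with hy
  have hbr : ∀ i j, i ≠ j → br x y i j ≠ 0 := by
    intro i j hij h
    have := congrArg (eval (Sum.elim (Pi.single i (1 : K)) (Pi.single j (1 : K)))) h
    simp [br, hx, hy, hij, hij.symm] at this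
  have hx0 : ∀ i, x i ≠ 0 := fun i => X_ne_zero _
  have hy0 : ∀ i, y i ≠ 0 := fun i => X_ne_zero _
  have hc : cvec x y ≠ 0 := by
    intro h
    have h' : cc x y 0 1 2 3 4 = 0 := congrFun h 0
    revert h'
    simp [cc, hx0, hy0, hbr]
  have hdet : (condMat i0 j0 x y).det = 0 :=
    Matrix.exists_mulVec_eq_zero_iff.1 ⟨_, hc, condMat_cvec i0 j0 x y⟩
  have := congrArg (eval (Sum.elim a b)) hdet
  rw [RingHom.map_det, condMat_map] at this
  simpa [hx, hy] using this

/-- Euler relation for squarefree cubics. -/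
lemma euler_cubic {R : Type} [CommRing R] (a : Fin 5 → R) (s : Fin 10) :
    ∑ m, a m * dmon a m s = 3 * mon a s := by
  simp only [dmon, mul_add, Finset.sum_add_distrib, mul_ite, mul_zero, Finset.sum_ite_eq',
    Finset.mem_univ, if_true, mon]
  ring

lemma rows_vanish {K : Type} [Field K] {i0 : Fin 5} {a : Fin 5 → K} (ha : a i0 ≠ 0)
    {c : Fin 10 → K} (h : ∀ m, ∑ s, rowv i0 a m s * c s = 0) :
    ∑ s, mon a s * c s = 0 ∧ ∀ m, ∑ s, dmon a m s * c s = 0 := by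
  have h0 : ∑ s, mon a s * c s = 0 := by simpa [rowv] using h i0
  have h1 : ∀ m, m ≠ i0 → ∑ s, dmon a m s * c s = 0 := fun m hm => by
    simpa [rowv, hm] using h m
  refine ⟨h0, fun m => ?_⟩
  by_cases hm : m = i0
  · subst hm
    have e : ∑ m, a m * ∑ s, dmon a m s * c s = 3 * ∑ s, mon a s * c s := by
      simp only [Finset.mul_sum]
      rw [Finset.sum_comm]
      refine Finset.sum_congr rfl fun s _ => ?_
      rw [← mul_assoc, ← euler_cubic, Finset.sum_mul]
      exact Finset.sum_congr rfl fun _ _ => by ring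
    rw [h0, mul_zero, Finset.sum_eq_single m (fun b _ hb => by rw [h1 b hb, mul_zero])
      (by simp)] at e
    exact (mul_eq_zero.1 e).resolve_left ha
  · exact h1 m hm

lemma exists_coeffs {K : Type} [Field K] {a b : Fin 5 → K} (ha : a ≠ 0) (hb : b ≠ 0) :
    ∃ c : Fin 10 → K, c ≠ 0 ∧
      (∑ s, mon a s * c s = 0 ∧ ∀ m, ∑ s, dmon a m s * c s = 0) ∧
      (∑ s, mon b s * c s = 0 ∧ ∀ m, ∑ s, dmon b m s * c s = 0) := by
  obtain ⟨i0, hi0⟩ := Function.ne_iff.1 ha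
  obtain ⟨j0, hj0⟩ := Function.ne_iff.1 hb
  obtain ⟨c, hc, hMc⟩ := Matrix.exists_mulVec_eq_zero_iff.2 (condMat_det i0 j0 a b)
  refine ⟨c, hc, rows_vanish hi0 fun m => ?_, rows_vanish hj0 fun m => ?_⟩
  · have := congrFun hMc (finSumFinEquiv (m := 5) (n := 5) (Sum.inl m))
    simpa only [Matrix.mulVec, dotProduct, condMat, Equiv.symm_apply_apply, Sum.elim_inl,
      Pi.zero_apply] using this
  · have := congrFun hMc (finSumFinEquiv (m := 5) (n := 5) (Sum.inr m))
    simpa only [Matrix.mulVec, dotProduct, condMat, Equiv.symm_apply_apply, Sum.elim_inr,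
      Pi.zero_apply] using this

/-- The cubic form with coefficients `c` in the linear forms `ℓ`. -/
def cubic {K : Type} [Field K] (c : Fin 10 → K) (l : Fin 5 → MvPolynomial (Fin 5) K) :
    MvPolynomial (Fin 5) K := ∑ s, C (c s) * mon l s

lemma cubic_homog {K : Type} [Field K] (c : Fin 10 → K) (g : Fin 5 → Fin 5 → K) :
    (cubic c fun i => linForm (g i)).IsHomogeneous 3 :=
  IsHomogeneous.sum _ _ _ fun s _ =>
    (((linForm_homog _).mul (linForm_homog _)).mul (linForm_homog _)).C_mul _

lemma eval_cubic {K : Type} [Field K] (c : Fin 10 → K) (l : Fin 5 → MvPolynomial (Fin 5) K)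
    (q : Fin 5 → K) :
    eval q (cubic c l) = ∑ s, mon (fun i => eval q (l i)) s * c s := by
  simp only [cubic, mon, map_sum, map_mul, eval_C]
  exact Finset.sum_congr rfl fun _ _ => by ring

lemma eval_pderiv_cubic {K : Type} [Field K] (c : Fin 10 → K) (g : Fin 5 → Fin 5 → K)
    (q : Fin 5 → K) (n : Fin 5) :
    eval q (pderiv n (cubic c fun i => linForm (g i))) =
      ∑ m, g m n * ∑ s, dmon (fun i => eval q (linForm (g i))) m s * c s := by
  have h : ∀ s, eval q (pderiv n (C (c s) * mon (fun i => linForm (g i)) s)) =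
      ∑ m, g m n * (dmon (fun i => eval q (linForm (g i))) m s * c s) := by
    intro s
    have e : ∑ m, g m n * (dmon (fun i => eval q (linForm (g i))) m s * c s) =
        (∑ m, g m n * dmon (fun i => eval q (linForm (g i))) m s) * c s := by
      rw [Finset.sum_mul]
      exact Finset.sum_congr rfl fun _ _ => by ring
    rw [e]
    simp only [dmon, mul_add, Finset.sum_add_distrib, mul_ite, mul_zero, Finset.sum_ite_eq',
      Finset.mem_univ, if_true, mon, pderiv_C, map_zero, zero_mul, pderiv_mul, pderiv_linForm, map_add, map_mul,
      eval_C]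
    ring
  simp only [cubic, map_sum, h, Finset.mul_sum]
  exact Finset.sum_comm

lemma cubic_mem {K : Type} [Field K] (c : Fin 10 → K) (g : Fin 5 → Fin 5 → K)
    {q : Fin 5 → K} (hq : q ≠ 0) {a : Fin 5 → K} (ha : ∀ i, eval q (linForm (g i)) = a i)
    (h : ∑ s, mon a s * c s = 0 ∧ ∀ m, ∑ s, dmon a m s * c s = 0) :
    (cubic c fun i => linForm (g i)) ∈ pointIdeal q ^ 2 := by
  have ha' : (fun i => eval q (linForm (g i))) = a := funext ha
  refine mem_sq_of_pderiv (cubic_homog c g) hq ?_ fun m => ?_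
  · rw [eval_cubic, ha']; exact h.1
  · rw [eval_pderiv_cubic, ha']; simp [h.2]

lemma std_vanish {K : Type} [Field K] (c : Fin 10 → K) (j : Fin 5) :
    ∑ s, mon (Pi.single j 1 : Fin 5 → K) s * c s = 0 ∧
      ∀ m, ∑ s, dmon (Pi.single j 1 : Fin 5 → K) m s * c s = 0 := by
  have h12 : ∀ s, ti s ≠ tj s := by decide
  have h13 : ∀ s, ti s ≠ tk s := by decide
  have h23 : ∀ s, tj s ≠ tk s := by decide
  have e : ∀ x y : Fin 5, x ≠ y →
      (Pi.single j 1 : Fin 5 → K) x * (Pi.single j 1 : Fin 5 → K) y = 0 := by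
    intro x y hxy
    by_cases hx : x = j
    · have : y ≠ j := fun h => hxy (hx.trans h.symm)
      simp [this]
    · simp [hx]
  constructor
  · refine Finset.sum_eq_zero fun s _ => ?_
    rw [mon, e _ _ (h12 s)]; simp
  · intro m
    refine Finset.sum_eq_zero fun s _ => ?_
    rw [dmon, e _ _ (h12 s), e _ _ (h13 s), e _ _ (h23 s)]; simp

/-- The indicator vector of a triple picks out one coefficient. -/
lemma mon_indicator {K : Type} [Field K] (c : Fin 10 → K) (s : Fin 10) :
    ∑ r, mon (fun i : Fin 5 => if i = ti s ∨ i = tj s ∨ i = tk s then (1 : K) else 0) r * c r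
      = c s := by
  have h : ∀ s r : Fin 10, r ≠ s → ¬ ((ti r = ti s ∨ ti r = tj s ∨ ti r = tk s) ∧
      (tj r = ti s ∨ tj r = tj s ∨ tj r = tk s) ∧ (tk r = ti s ∨ tk r = tj s ∨ tk r = tk s)) := by
    decide
  rw [Finset.sum_eq_single s]
  · simp [mon]
  · intro r _ hr
    have := h s r hr
    simp only [mon]
    split_ifs <;> simp_all
  · simp

lemma exists_cubic {K : Type} [Field K] (p : Fin 7 → Fin 5 → K) (hp : ∀ i, p i ≠ 0)
    (hspan : Submodule.span K (Set.range p) = ⊤) :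
    ∃ F : MvPolynomial (Fin 5) K, F ≠ 0 ∧ F.IsHomogeneous 3 ∧
      F ∈ fatIdeal p (fun _ => 2) := by
  classical
  have h5 : Module.finrank K ↥(Submodule.span K (Set.range p)) = 5 := by
    rw [hspan, finrank_top]; simp
  obtain ⟨f, hf, hfs, hfl⟩ : ∃ f : Fin 5 → Fin 5 → K, (∀ i, f i ∈ Set.range p) ∧
      Submodule.span K (Set.range f) = ⊤ ∧ LinearIndependent K f := by
    rw [← hspan]
    have hex := Submodule.exists_fun_fin_finrank_span_eq K (Set.range p)
    rw [h5] at hex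
    exact hex
  choose σ hσ using hf
  have hσi : Function.Injective σ := by
    intro i j hij
    exact hfl.injective (by rw [← hσ, ← hσ, hij])
  have hcard : (Finset.univ.image σ)ᶜ.card = 2 := by
    rw [Finset.card_compl, Finset.card_image_of_injective _ hσi]; simp
  obtain ⟨u, v, -, huv⟩ := Finset.card_eq_two.1 hcard
  have hcases : ∀ i, (∃ j, σ j = i) ∨ i = u ∨ i = v := by
    intro i
    by_cases hi : i ∈ Finset.univ.image σ
    · left; simpa using hi
    · right
      have := Finset.mem_compl.2 hi
      rw [huv] at this
      simpa using this
  let B := Module.Basis.mk hfl hfs.ge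
  have hB : ∀ j, B j = f j := fun j => by simp [B]
  choose g hg using fun i => exists_linForm (B.coord i)
  have hne : ∀ q : Fin 5 → K, q ≠ 0 → (fun i => B.coord i q) ≠ 0 := by
    intro q hq h
    apply hq
    apply B.repr.injective
    ext i
    simpa using congrFun h i
  obtain ⟨c, hc, hca, hcb⟩ := exists_coeffs (hne _ (hp u)) (hne _ (hp v))
  refine ⟨cubic c fun i => linForm (g i), ?_, cubic_homog c g, ?_⟩
  · intro h0
    apply hc
    funext s
    set q : Fin 5 → K := ∑ i, (if i = ti s ∨ i = tj s ∨ i = tk s then (1 : K) else 0) • B i with hq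
    have e := congrArg (eval q) h0
    rw [eval_cubic, map_zero] at e
    have e' : (fun i => eval q (linForm (g i))) =
        fun i => if i = ti s ∨ i = tj s ∨ i = tk s then (1 : K) else 0 := by
      funext i
      rw [hg, hq, Module.Basis.coord_apply, B.repr_sum_self]
    rw [e', mon_indicator] at e
    exact e
  · simp only [fatIdeal, Submodule.mem_iInf]
    intro i
    rcases hcases i with ⟨j, hj⟩ | rfl | rfl
    · refine cubic_mem c g (hp i) (a := Pi.single j 1) (fun k => ?_) (std_vanish c j)
      rw [hg, ← hj, hσ, ← hB, Module.Basis.coord_apply, B.repr_self, Finsupp.single_apply,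
        Pi.single_apply]
      simp [eq_comm]
    · exact cubic_mem c g (hp _) (fun k => hg k _) hca
    · exact cubic_mem c g (hp _) (fun k => hg k _) hcb

/-- Lemma 4.1: seven non-degenerate double points in `ℙ⁴` have `reg(Z) ≥ 4`. -/
theorem stmt9 {K : Type} [Field K] [IsAlgClosed K]
    (p : Fin 7 → Fin 5 → K) (hdist : ProjDistinct p)
    (hspan : Submodule.span K (Set.range p) = ⊤) :
    4 ≤ regFat K p (fun _ => 2) := by
  have hmult : fatMult 4 (fun _ : Fin 7 => 2) = 35 := by simp [fatMult]
  unfold regFat regIndex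
  rw [hmult]
  have hne : {t | hilbFn K (fatIdeal p (fun _ => 2)) t = 35}.Nonempty := by
    by_cases h13 : ((13 : ℕ) : K) = 0
    · refine ⟨14, hilb_large p hdist (by norm_num) ?_⟩
      rw [show (14 : ℕ) = 13 + 1 from rfl, Nat.cast_add, h13]
      simp
    · exact ⟨13, hilb_large p hdist le_rfl h13⟩
  refine le_csInf hne fun t ht => ?_
  by_contra hlt
  have ht' : hilbFn K (fatIdeal p (fun _ => 2)) t = 35 := ht
  unfold hilbFn at ht'
  have hle := finrank_homog_le K t
  have ht3 : t = 0 ∨ t = 1 ∨ t = 2 ∨ t = 3 := by omega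
  rcases ht3 with rfl | rfl | rfl | rfl
  · norm_num [Nat.choose] at hle; omega
  · norm_num [Nat.choose] at hle; omega
  · norm_num [Nat.choose] at hle; omega
  · have hle' : Module.finrank K ↥(homogeneousSubmodule (Fin 5) K 3) ≤ 35 := by
      refine hle.trans (le_of_eq ?_)
      decide
    obtain ⟨F, hF0, hFh, hFI⟩ := exists_cubic p hdist.1 hspan
    have hfin : FiniteDimensional K ↥(homogeneousSubmodule (Fin 5) K 3 ⊓
        (fatIdeal p (fun _ => 2)).restrictScalars K) :=
      Submodule.finiteDimensional_of_le inf_le_left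
    have hpos : 0 < gradedDim K (fatIdeal p (fun _ => 2)) 3 := by
      unfold gradedDim
      rw [Module.finrank_pos_iff_exists_ne_zero]
      exact ⟨⟨F, hFh, hFI⟩, fun h => hF0 (congrArg Subtype.val h)⟩
    omega
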